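/- In the tensor product model of F_γ ⊗ D⁺_j (see context), for each μ ∈ M_γ the vector ψ_(μ) := Σ_{ν=−γ}^{μ} (−1)^{γ+ν} · (∏_{σ=−γ}^{ν−1} Γ₊(j, j+μ−σ)/Γ₊(γ,σ)) · e_ν ⊗ f_{j+1+μ−ν} is nonzero and satisfies J₋ ψ_(μ) = 0 and Q ψ_(μ) = −(j+μ)(j+μ+1)·ψ_(μ); i.e. the ψ_(μ) are lowest weight vectors and Casimir eigenvectors with eigenvalues q_(μ) = −(j+μ)(j+μ+1). -/

import Mathlib

noncomputable section

/-- The principal complex square root, `√z = z^{1/2}` (so `(√z)² = z` for all `z ∈ ℂ`). -/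
def csqrt (z : ℂ) : ℂ := z ^ (1 / 2 : ℂ)

/-- `Γ₊(x,y) = i √(x-y) √(x+y+1)`. -/
def Gp (x y : ℂ) : ℂ := Complex.I * csqrt (x - y) * csqrt (x + y + 1)

/-- `Γ₋(x,y) = i √(x+y) √(x-y+1)`. -/
def Gm (x y : ℂ) : ℂ := Complex.I * csqrt (x + y) * csqrt (x - y + 1)

/-- The carrier of the coupling `F_γ ⊗ D⁺_j` with `2γ = N`: the basis vector
`e_ν ⊗ f_m` with `ν = -γ + a` (`a ≤ N`) and `m = j + 1 + b` is indexed by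
`(a, b) : Fin (N+1) × ℕ`. -/
abbrev Wmod (N : ℕ) := (Fin (N + 1) × ℕ) →₀ ℂ

/-- `γ = N/2` as a complex number. -/
def gammaC (N : ℕ) : ℂ := (N : ℂ) / 2

/-- `ν = -γ + a`. -/
def nuC (N : ℕ) (a : Fin (N + 1)) : ℂ := -gammaC N + (a : ℕ)

/-- `m = j + 1 + b`. -/
def mC (j : ℂ) (b : ℕ) : ℂ := j + 1 + (b : ℕ)

/-- `J₀ (e_ν ⊗ f_m) = (ν + m) e_ν ⊗ f_m`. -/
def J0op (N : ℕ) (j : ℂ) : Wmod N →ₗ[ℂ] Wmod N :=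
  Finsupp.lsum ℂ fun ab => (nuC N ab.1 + mC j ab.2) • Finsupp.lsingle ab

/-- `J₊ (e_ν ⊗ f_m) = Γ₊(γ,ν) e_{ν+1} ⊗ f_m + Γ₊(j,m) e_ν ⊗ f_{m+1}` (terms with
vanishing coefficient drop out, so the wrap-around `Fin` index is harmless). -/
def Jpop (N : ℕ) (j : ℂ) : Wmod N →ₗ[ℂ] Wmod N :=
  Finsupp.lsum ℂ fun ab =>
    Gp (gammaC N) (nuC N ab.1) • Finsupp.lsingle (ab.1 + 1, ab.2) +
    Gp j (mC j ab.2) • Finsupp.lsingle (ab.1, ab.2 + 1)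

/-- `J₋ (e_ν ⊗ f_m) = Γ₋(γ,ν) e_{ν-1} ⊗ f_m + Γ₋(j,m) e_ν ⊗ f_{m-1}` (terms with
vanishing coefficient drop out, so the truncated index is harmless). -/
def Jmop (N : ℕ) (j : ℂ) : Wmod N →ₗ[ℂ] Wmod N :=
  Finsupp.lsum ℂ fun ab =>
    Gm (gammaC N) (nuC N ab.1) • Finsupp.lsingle (ab.1 - 1, ab.2) +
    Gm j (mC j ab.2) • Finsupp.lsingle (ab.1, ab.2 - 1)

/-- The Casimir operator `Q = -J₀(J₀+1) + J₋J₊`. -/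
def Qop (N : ℕ) (j : ℂ) : Wmod N →ₗ[ℂ] Wmod N :=
  -(J0op N j ∘ₗ (J0op N j + LinearMap.id)) + Jmop N j ∘ₗ Jpop N j

/-- The vector `ψ_(μ)`, `μ = -γ + u`:
`ψ_(μ) = ∑_{ν=-γ}^{μ} (-1)^{γ+ν} (∏_{σ=-γ}^{ν-1} Γ₊(j, j+μ-σ)/Γ₊(γ,σ)) e_ν ⊗ f_{j+1+μ-ν}`. -/
def psiVec (N : ℕ) (j : ℂ) (u : ℕ) (hu : u ≤ N) : Wmod N :=
  ∑ a : Fin (u + 1),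
    ((-1 : ℂ) ^ (a : ℕ) *
      ∏ s ∈ Finset.range (a : ℕ),
        Gp j (j + (u : ℂ) - (s : ℂ)) / Gp (gammaC N) (-gammaC N + (s : ℂ))) •
      Finsupp.single (Fin.castLE (Nat.succ_le_succ hu) a, u - (a : ℕ)) (1 : ℂ)

/-!
Once `[J₋, J₊] = 2J₀` is known, the Casimir operator is `Q = -J₀(J₀ - 1) + J₊J₋`, so a vector of
weight `q + 1` killed by `J₋` is a Casimir eigenvector with eigenvalue `-q(q + 1)`. Every term of
`ψ_(μ)` has weight `j + μ + 1`. In `J₋ψ_(μ)` the basis vector `e_ν ⊗ f_{j+μ-ν}` is reached from the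
terms `ν` and `ν + 1` of `ψ_(μ)`, and since `Γ₋(x, y + 1) = Γ₊(x, y)`, the recursion satisfied by
the coefficients of `ψ_(μ)` says that these two contributions cancel.
-/

section Casimir

variable {R V : Type*} [CommRing R] [AddCommGroup V] [Module R V]

lemma casimir_apply_of_lowest_weight {J₀ Jp Jm : Module.End R V} (hJ : ⁅Jm, Jp⁆ = (2 : R) • J₀)
    {q : R} {v : V} (hv₀ : J₀ v = (q + 1) • v) (hvm : Jm v = 0) :
    (-(J₀ * (J₀ + 1)) + Jm * Jp) v = (-(q * (q + 1))) • v := by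
  have hcasimir : -(J₀ * (J₀ + 1)) + Jm * Jp = -(J₀ * (J₀ + 1)) + ((2 : R) • J₀ + Jp * Jm) := by
    rw [← hJ, Ring.lie_def, sub_add_cancel]
  simp only [hcasimir, LinearMap.add_apply, LinearMap.neg_apply, LinearMap.smul_apply,
    Module.End.mul_apply, Module.End.one_apply, map_add, map_smul, hv₀, hvm, map_zero]
  module

end Casimir

lemma csqrt_sq (z : ℂ) : csqrt z ^ 2 = z := by
  simpa only [csqrt, one_div, Nat.cast_ofNat] using Complex.cpow_nat_inv_pow z two_ne_zero

lemma csqrt_eq_zero_iff {z : ℂ} : csqrt z = 0 ↔ z = 0 := by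
  rw [← pow_eq_zero_iff two_ne_zero, csqrt_sq]

lemma Gp_eq_zero_iff {x y : ℂ} : Gp x y = 0 ↔ x - y = 0 ∨ x + y + 1 = 0 := by
  simp only [Gp, mul_eq_zero, Complex.I_ne_zero, csqrt_eq_zero_iff, false_or]

lemma Gm_eq_zero_iff {x y : ℂ} : Gm x y = 0 ↔ x + y = 0 ∨ x - y + 1 = 0 := by
  simp only [Gm, mul_eq_zero, Complex.I_ne_zero, csqrt_eq_zero_iff, false_or]

lemma Gp_sq (x y : ℂ) : Gp x y ^ 2 = -((x - y) * (x + y + 1)) := by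
  rw [Gp, mul_pow, mul_pow, Complex.I_sq, csqrt_sq, csqrt_sq]
  ring

lemma Gm_add_one (x y : ℂ) : Gm x (y + 1) = Gp x y := by
  rw [Gm, Gp, ← add_assoc, sub_add_eq_sub_sub, sub_add_cancel, mul_right_comm]

lemma succ_sub_one_eq_castSucc {n : ℕ} (i : Fin n) : i.succ - 1 = i.castSucc := by
  rw [sub_eq_iff_eq_add, Fin.coeSucc_eq_succ]

lemma nuC_zero (N : ℕ) : nuC N 0 = -gammaC N := by
  simp [nuC]

lemma nuC_last (N : ℕ) : nuC N (Fin.last N) = gammaC N := by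
  simp only [nuC, gammaC, Fin.val_last]
  ring

lemma nuC_succ {N : ℕ} (i : Fin N) : nuC N i.succ = nuC N i.castSucc + 1 := by
  simp only [nuC, Fin.val_succ, Fin.val_castSucc, Nat.cast_add_one, add_assoc]

lemma mC_zero (j : ℂ) : mC j 0 = j + 1 := by
  simp [mC]

lemma mC_add_one (j : ℂ) (b : ℕ) : mC j (b + 1) = mC j b + 1 := by
  simp only [mC, Nat.cast_add_one, add_assoc]

lemma Gm_gammaC_nuC_zero (N : ℕ) : Gm (gammaC N) (nuC N 0) = 0 :=
  Gm_eq_zero_iff.mpr <| .inl <| by rw [nuC_zero, add_neg_cancel]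

lemma Gm_mC_zero (j : ℂ) : Gm j (mC j 0) = 0 :=
  Gm_eq_zero_iff.mpr <| .inr <| by rw [mC_zero]; ring

lemma Gp_gammaC_nuC_castSucc_ne_zero {N : ℕ} (i : Fin N) :
    Gp (gammaC N) (nuC N i.castSucc) ≠ 0 := by
  have hsub : gammaC N - nuC N i.castSucc = (N : ℂ) - (i : ℕ) := by
    rw [nuC, gammaC, Fin.val_castSucc]; ring
  have hadd : gammaC N + nuC N i.castSucc + 1 = (i : ℕ) + 1 := by
    rw [nuC, Fin.val_castSucc]; ring
  rw [Ne, Gp_eq_zero_iff, hsub, hadd, not_or, sub_eq_zero, Nat.cast_inj]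
  exact ⟨i.isLt.ne', Nat.cast_add_one_ne_zero _⟩

lemma Gp_mul_Gm_gammaC (N : ℕ) (a : Fin (N + 1)) :
    Gp (gammaC N) (nuC N a) * Gm (gammaC N) (nuC N (a + 1)) =
      -((gammaC N - nuC N a) * (gammaC N + nuC N a + 1)) := by
  cases a using Fin.lastCases with
  | last => rw [Fin.last_add_one, Gm_gammaC_nuC_zero, nuC_last]; ring
  | cast i => rw [Fin.coeSucc_eq_succ, nuC_succ, Gm_add_one, ← sq, Gp_sq]

lemma Gm_mul_Gp_gammaC (N : ℕ) (a : Fin (N + 1)) :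
    Gm (gammaC N) (nuC N a) * Gp (gammaC N) (nuC N (a - 1)) =
      -((gammaC N - nuC N a + 1) * (gammaC N + nuC N a)) := by
  cases a using Fin.cases with
  | zero => rw [Gm_gammaC_nuC_zero, nuC_zero]; ring
  | succ i => rw [succ_sub_one_eq_castSucc, nuC_succ, Gm_add_one, ← sq, Gp_sq]; ring

lemma J0op_single (N : ℕ) (j : ℂ) (a : Fin (N + 1)) (b : ℕ) (c : ℂ) :
    J0op N j (Finsupp.single (a, b) c) = (nuC N a + mC j b) • Finsupp.single (a, b) c := by
  simp [J0op]

lemma Jpop_single (N : ℕ) (j : ℂ) (a : Fin (N + 1)) (b : ℕ) (c : ℂ) :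
    Jpop N j (Finsupp.single (a, b) c) =
      Gp (gammaC N) (nuC N a) • Finsupp.single (a + 1, b) c +
        Gp j (mC j b) • Finsupp.single (a, b + 1) c := by
  simp [Jpop]

lemma Jmop_single (N : ℕ) (j : ℂ) (a : Fin (N + 1)) (b : ℕ) (c : ℂ) :
    Jmop N j (Finsupp.single (a, b) c) =
      Gm (gammaC N) (nuC N a) • Finsupp.single (a - 1, b) c +
        Gm j (mC j b) • Finsupp.single (a, b - 1) c := by
  simp [Jmop]

lemma Jmop_Jpop_single (N : ℕ) (j : ℂ) (a : Fin (N + 1)) (b : ℕ) (c : ℂ) :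
    Jmop N j (Jpop N j (Finsupp.single (a, b) c)) =
      -((gammaC N - nuC N a) * (gammaC N + nuC N a + 1) +
          (j - mC j b) * (j + mC j b + 1)) • Finsupp.single (a, b) c +
        (Gp (gammaC N) (nuC N a) * Gm j (mC j b)) • Finsupp.single (a + 1, b - 1) c +
        (Gm (gammaC N) (nuC N a) * Gp j (mC j b)) • Finsupp.single (a - 1, b + 1) c := by
  have hseries : Gp j (mC j b) * Gm j (mC j (b + 1)) = -((j - mC j b) * (j + mC j b + 1)) := by
    rw [mC_add_one, Gm_add_one, ← sq, Gp_sq]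
  simp only [Jpop_single, Jmop_single, map_add, map_smul, smul_add, smul_smul,
    add_sub_cancel_right, add_tsub_cancel_right, Gp_mul_Gm_gammaC, hseries]
  module

lemma Jpop_Jmop_single (N : ℕ) (j : ℂ) (a : Fin (N + 1)) (b : ℕ) (c : ℂ) :
    Jpop N j (Jmop N j (Finsupp.single (a, b) c)) =
      -((gammaC N - nuC N a + 1) * (gammaC N + nuC N a) +
          (j - mC j b + 1) * (j + mC j b)) • Finsupp.single (a, b) c +
        (Gp (gammaC N) (nuC N a) * Gm j (mC j b)) • Finsupp.single (a + 1, b - 1) c +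
        (Gm (gammaC N) (nuC N a) * Gp j (mC j b)) • Finsupp.single (a - 1, b + 1) c := by
  have hseries : (Gm j (mC j b) * Gp j (mC j (b - 1))) • Finsupp.single (a, b - 1 + 1) c =
      -((j - mC j b + 1) * (j + mC j b)) • Finsupp.single (a, b) c := by
    cases b with
    | zero =>
      rw [Gm_mC_zero, mC_zero, zero_mul, zero_smul]
      module
    | succ b =>
      rw [add_tsub_cancel_right, mC_add_one, Gm_add_one, ← sq, Gp_sq]
      module
  simp only [Jpop_single, Jmop_single, map_add, map_smul, smul_add, smul_smul, sub_add_cancel,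
    Gm_mul_Gp_gammaC, hseries]
  module

lemma lie_Jmop_Jpop (N : ℕ) (j : ℂ) :
    ⁅(Jmop N j : Module.End ℂ (Wmod N)), Jpop N j⁆ = (2 : ℂ) • J0op N j := by
  refine Finsupp.lhom_ext fun ⟨a, b⟩ c => ?_
  rw [Ring.lie_def, LinearMap.sub_apply, Module.End.mul_apply, Module.End.mul_apply,
    LinearMap.smul_apply, Jmop_Jpop_single, Jpop_Jmop_single, J0op_single]
  module

/-- The coefficient of `e_ν ⊗ f_{j+1+μ-ν}` in `ψ_(μ)`, where `ν = -γ + a` and `μ = -γ + u`. -/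
def psiCoeff (N : ℕ) (j : ℂ) (u a : ℕ) : ℂ :=
  (-1 : ℂ) ^ a * ∏ s ∈ Finset.range a,
    Gp j (j + (u : ℂ) - (s : ℂ)) / Gp (gammaC N) (-gammaC N + (s : ℂ))

lemma psiVec_eq_sum_psiCoeff (N : ℕ) (j : ℂ) (u : ℕ) (hu : u ≤ N) :
    psiVec N j u hu = ∑ a : Fin (u + 1), psiCoeff N j u a •
      Finsupp.single (Fin.castLE (Nat.succ_le_succ hu) a, u - (a : ℕ)) (1 : ℂ) := rfl

lemma psiCoeff_succ_mul_Gp {N : ℕ} (j : ℂ) (u : ℕ) (i : Fin N) :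
    psiCoeff N j u (i + 1) * Gp (gammaC N) (nuC N i.castSucc) =
      -(psiCoeff N j u i * Gp j (j + u - (i : ℕ))) := by
  have hne := Gp_gammaC_nuC_castSucc_ne_zero i
  simp only [nuC, Fin.val_castSucc] at hne ⊢
  rw [psiCoeff, psiCoeff, Finset.prod_range_succ, pow_succ]
  field_simp

lemma psiCoeff_succ_mul_Gm {N : ℕ} (j : ℂ) {u : ℕ} (i : Fin N) (hi : (i : ℕ) ≤ u) :
    psiCoeff N j u (i + 1) * Gm (gammaC N) (nuC N i.succ) =
      -(psiCoeff N j u i * Gm j (mC j (u - i))) := by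
  have hm : mC j (u - i) = j + u - (i : ℕ) + 1 := by
    rw [mC, Nat.cast_sub hi]
    ring
  rw [nuC_succ, Gm_add_one, hm, Gm_add_one, psiCoeff_succ_mul_Gp]

lemma psiVec_apply_zero (N : ℕ) (j : ℂ) (u : ℕ) (hu : u ≤ N) : psiVec N j u hu (0, u) = 1 := by
  rw [psiVec_eq_sum_psiCoeff, Fin.sum_univ_succ]
  simp [Fin.ext_iff, psiCoeff]

lemma psiVec_ne_zero (N : ℕ) (j : ℂ) (u : ℕ) (hu : u ≤ N) : psiVec N j u hu ≠ 0 := fun h =>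
  one_ne_zero (α := ℂ) <| by rw [← psiVec_apply_zero N j u hu, h, Finsupp.zero_apply]

lemma J0op_psiVec (N : ℕ) (j : ℂ) (u : ℕ) (hu : u ≤ N) :
    J0op N j (psiVec N j u hu) = (j + (-gammaC N + (u : ℂ)) + 1) • psiVec N j u hu := by
  rw [psiVec_eq_sum_psiCoeff, map_sum, Finset.smul_sum]
  refine Finset.sum_congr rfl fun a _ => ?_
  have hweight : nuC N (Fin.castLE (Nat.succ_le_succ hu) a) + mC j (u - (a : ℕ)) =
      j + (-gammaC N + (u : ℂ)) + 1 := by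
    rw [nuC, mC, Nat.cast_sub a.is_le, Fin.val_castLE]
    ring
  rw [map_smul, J0op_single, hweight, smul_comm]

lemma Jmop_psiVec (N : ℕ) (j : ℂ) (u : ℕ) (hu : u ≤ N) : Jmop N j (psiVec N j u hu) = 0 := by
  let incl : Fin (u + 1) → Fin (N + 1) := Fin.castLE (Nat.succ_le_succ hu)
  let seriesPart : Wmod N := ∑ i : Fin u, (psiCoeff N j u i * Gm j (mC j (u - i))) •
    Finsupp.single ((i.castLE hu).castSucc, u - i - 1) 1
  have hfinite : ∑ a : Fin (u + 1), (psiCoeff N j u a * Gm (gammaC N) (nuC N (incl a))) •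
      Finsupp.single (incl a - 1, u - (a : ℕ)) (1 : ℂ) = -seriesPart := by
    have hzero : Gm (gammaC N) (nuC N (incl 0)) = 0 := Gm_gammaC_nuC_zero N
    rw [Fin.sum_univ_succ, hzero, mul_zero, zero_smul, zero_add, ← Finset.sum_neg_distrib]
    refine Finset.sum_congr rfl fun i _ => ?_
    have hcancel := psiCoeff_succ_mul_Gm j (i.castLE hu) i.isLt.le
    have hincl : incl i.succ = (i.castLE hu).succ := Fin.castLE_succ _ i
    rw [Fin.val_castLE] at hcancel
    rw [hincl, succ_sub_one_eq_castSucc, Fin.val_succ, hcancel, Nat.sub_succ', neg_smul]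
  have hseries : ∑ a : Fin (u + 1), (psiCoeff N j u a * Gm j (mC j (u - a))) •
      Finsupp.single (incl a, u - (a : ℕ) - 1) (1 : ℂ) = seriesPart := by
    rw [Fin.sum_univ_castSucc, Fin.val_last, Nat.sub_self, Gm_mC_zero, mul_zero, zero_smul,
      add_zero]
    rfl
  simp only [psiVec_eq_sum_psiCoeff, map_sum, map_smul, Jmop_single, smul_add, smul_smul,
    Finset.sum_add_distrib]
  exact (congrArg₂ (· + ·) hfinite hseries).trans (neg_add_cancel seriesPart)

/-- In `F_γ ⊗ D⁺_j`, each `ψ_(μ)` (`μ ∈ M_γ`) is a nonzero lowest weight vector and a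
Casimir eigenvector with eigenvalue `q_(μ) = -(j+μ)(j+μ+1)`. -/
theorem lowest_weight_vectors (N : ℕ) (hN : 1 ≤ N) (j : ℂ) (u : ℕ) (hu : u ≤ N) :
    psiVec N j u hu ≠ 0 ∧
    Jmop N j (psiVec N j u hu) = 0 ∧
    Qop N j (psiVec N j u hu) =
      (-((j + (-gammaC N + (u : ℂ))) * (j + (-gammaC N + (u : ℂ)) + 1))) •
        psiVec N j u hu := by
  have hweight := J0op_psiVec N j u hu
  have hlowest := Jmop_psiVec N j u hu
  exact ⟨psiVec_ne_zero N j u hu, hlowest,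
    casimir_apply_of_lowest_weight (lie_Jmop_Jpop N j) hweight hlowest⟩

end
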